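/- If n ≠ 2m with 1 ≤ m < n, then for every pair of distinct x, y ∈ X (0-1 tuples of length n with exactly m ones) there exists j with 1 ≤ j ≤ n−1 such that q_{x_j,x_{j+1}} ≠ q_{y_j,y_{j+1}}, where q_{a,b} = 1 if a = b and q_{a,b} = t if a ≠ b. -/

import Mathlib

/-- The set of 0-1 `n`-tuples with exactly `m` ones. -/
def Xm (n m : ℕ) : Set (Fin n → ℕ) :=
  {x | (∀ i, x i ≤ 1) ∧ (Finset.univ.filter fun i => x i = 1).card = m}

/-!
Whether two 0-1 labelings of the vertices of a graph agree at a vertex is constant along every edge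
on which they have the same equality pattern. If the graph is connected and the patterns coincide
on all edges, the labelings are therefore equal or complementary; complementary labelings with `m`
ones each live on `2 * m` vertices. Tuples are labelings of a path.
-/

theorem eq_iff_eq_of_eq_iff_eq_of_le_one {a b c d : ℕ} (ha : a ≤ 1) (hb : b ≤ 1) (hc : c ≤ 1)
    (hd : d ≤ 1) (h : a = b ↔ c = d) : a = c ↔ b = d := by
  omega

theorem ite_eq_ite_iff_of_ne {R : Type*} {s t : R} (hst : s ≠ t) {p q : Prop} [Decidable p]
    [Decidable q] : (if p then s else t) = (if q then s else t) ↔ (p ↔ q) := by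
  by_cases hp : p <;> by_cases hq : q <;> simp [hp, hq, hst, hst.symm]

section BinaryLabelings

variable {V : Type*} {x y : V → ℕ}

theorem card_filter_one_add_card_filter_one_of_forall_ne [Fintype V] (hx : ∀ v, x v ≤ 1)
    (hy : ∀ v, y v ≤ 1) (hne : ∀ v, x v ≠ y v) :
    (Finset.univ.filter fun v => x v = 1).card + (Finset.univ.filter fun v => y v = 1).card =
      Fintype.card V := by
  have y_eq_one_iff (v : V) : y v = 1 ↔ ¬ x v = 1 := by
    have := hx v
    have := hy v
    have := hne v
    omega
  simp only [y_eq_one_iff]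
  exact Finset.card_filter_add_card_filter_not _

variable {G : SimpleGraph V}

theorem eq_iff_eq_of_preconnected (hG : G.Preconnected) (hx : ∀ v, x v ≤ 1) (hy : ∀ v, y v ≤ 1)
    (hadj : ∀ u v, G.Adj u v → (x u = x v ↔ y u = y v)) (u v : V) :
    x u = y u ↔ x v = y v := by
  obtain ⟨walk⟩ := hG u v
  induction walk with
  | nil => rfl
  | cons huv _ ih =>
    exact (eq_iff_eq_of_eq_iff_eq_of_le_one (hx _) (hx _) (hy _) (hy _) (hadj _ _ huv)).trans ih

theorem eq_of_preconnected_of_card_ne_two_mul [Fintype V] (hG : G.Preconnected) {m : ℕ}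
    (hm : Fintype.card V ≠ 2 * m) (hx : ∀ v, x v ≤ 1) (hy : ∀ v, y v ≤ 1)
    (hxm : (Finset.univ.filter fun v => x v = 1).card = m)
    (hym : (Finset.univ.filter fun v => y v = 1).card = m)
    (hadj : ∀ u v, G.Adj u v → (x u = x v ↔ y u = y v)) : x = y := by
  by_contra hxy
  obtain ⟨u, hu⟩ := Function.ne_iff.mp hxy
  have hne (v : V) : x v ≠ y v := fun hv => hu <| (eq_iff_eq_of_preconnected hG hx hy hadj u v).2 hv
  have hcard := card_filter_one_add_card_filter_one_of_forall_ne hx hy hne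
  omega

end BinaryLabelings

theorem forall_pathGraph_adj_eq_iff_eq {n : ℕ} {α β : Type*} {x : Fin n → α} {y : Fin n → β}
    (h : ∀ (j : ℕ) (hj : j + 1 < n), x ⟨j, Nat.lt_of_succ_lt hj⟩ = x ⟨j + 1, hj⟩ ↔
      y ⟨j, Nat.lt_of_succ_lt hj⟩ = y ⟨j + 1, hj⟩)
    (u v : Fin n) (huv : (SimpleGraph.pathGraph n).Adj u v) : x u = x v ↔ y u = y v := by
  obtain ⟨i, hi⟩ := u
  obtain ⟨j, hj⟩ := v
  rcases SimpleGraph.pathGraph_adj.mp huv with rfl | rfl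
  · exact h i hj
  · rw [eq_comm, h j hi, eq_comm]

theorem phi_m_coefficients_separate_general {n m : ℕ} (hn2m : n ≠ 2 * m) {R : Type*} {s t : R}
    (hst : s ≠ t) {x y : Fin n → ℕ} (hx : x ∈ Xm n m) (hy : y ∈ Xm n m) (hxy : x ≠ y) :
    ∃ (j : ℕ) (hj : j + 1 < n),
      (if x ⟨j, Nat.lt_of_succ_lt hj⟩ = x ⟨j + 1, hj⟩ then s else t) ≠
        (if y ⟨j, Nat.lt_of_succ_lt hj⟩ = y ⟨j + 1, hj⟩ then s else t) := by
  by_contra! hcoeff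
  simp only [ite_eq_ite_iff_of_ne hst] at hcoeff
  exact hxy <| eq_of_preconnected_of_card_ne_two_mul (SimpleGraph.pathGraph_preconnected n)
    (by rwa [Fintype.card_fin]) hx.1 hy.1 hx.2 hy.2 (forall_pathGraph_adj_eq_iff_eq hcoeff)

/-- If `n ≠ 2m` (with `1 ≤ m < n`), then for every pair of distinct
`x, y ∈ X` there exists `j` with `q_{x_j,x_{j+1}} ≠ q_{y_j,y_{j+1}}`, where `q_{a,b} = 1`
if `a = b` and `q_{a,b} = t` if `a ≠ b`. -/
theorem phi_m_coefficients_separate (n m : ℕ) (hn : 2 < n) (hm1 : 1 ≤ m) (hmn : m < n)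
    (hn2m : n ≠ 2 * m) (t : ℝ) (ht0 : t ≠ 0) (ht1 : t ≠ 1) (ht2 : t ≠ -1)
    (x y : ↥(Xm n m)) (hxy : x ≠ y) :
    ∃ (j : ℕ) (hj : j + 1 < n),
      (if x.1 ⟨j, Nat.lt_of_succ_lt hj⟩ = x.1 ⟨j + 1, hj⟩ then (1 : ℝ) else t) ≠
        (if y.1 ⟨j, Nat.lt_of_succ_lt hj⟩ = y.1 ⟨j + 1, hj⟩ then (1 : ℝ) else t) :=
  phi_m_coefficients_separate_general hn2m ht1.symm x.2 y.2 (Subtype.coe_ne_coe.mpr hxy)
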